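/- Let A ∈ ℝ^{p×p} be symmetric, G ∈ ℝ^{p×m}, and let H be a reflexive generalized inverse of GᵀG. Set Π = G H Gᵀ. Then Π A Π is the projection of A on S(G): Π A Π ∈ S(G) and ‖A − Π A Π‖ ≤ ‖A − Γ‖ for every Γ ∈ S(G). -/

import Mathlib

/-!
`Π = G H Gᴴ` is the orthogonal projector onto the column space of `G`: cancelling `Gᴴ` in
`GᴴG H GᴴG = GᴴG` gives `Π G = G`, hence `Π Πᴴ = Πᴴ`, so `Π` is Hermitian and idempotent.
Membership in `S(G)` follows by writing `Π A Π = Π A Πᴴ = G (H Gᴴ A G Hᴴ) Gᴴ`. For minimality, every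
`B = G Ψ Gᴴ` satisfies `Π B Π = B`, whereas the residual `R = A - Π A Π` satisfies `Π R Π = 0`. The
trace being cyclic, `R` is orthogonal to every `D = Π D Π`, in particular to `Π A Π - B`, and the
theorem of Pythagoras applies.
-/

open Matrix

/-- Frobenius norm of a matrix: `‖A‖ = √(tr (A Aᵀ))`. -/
noncomputable def frobNorm {a : Type*} [Fintype a] (A : Matrix a a ℝ) : ℝ :=
  Real.sqrt (Matrix.trace (A * Aᵀ))

section GramProjector

variable {m n R : Type*} [Fintype m]

/-- The matrix `Π = G H Gᴴ`: when `H` is a generalized inverse of the Gram matrix `GᴴG`, it is the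
orthogonal projector onto the column space of `G`. No condition on `H` is built in. -/
def gramProjector [NonUnitalNonAssocSemiring R] [Star R] (G : Matrix n m R)
    (H : Matrix m m R) : Matrix n n R :=
  G * H * Gᴴ

lemma conjTranspose_gramProjector [NonUnitalSemiring R] [StarRing R] (G : Matrix n m R)
    (H : Matrix m m R) : (gramProjector G H)ᴴ = gramProjector G Hᴴ := by
  simp only [gramProjector, conjTranspose_mul, conjTranspose_conjTranspose, Matrix.mul_assoc]

lemma exists_isHermitian_gramProjector_mul_mul_eq [Fintype n] [NonUnitalSemiring R] [StarRing R]
    {A : Matrix n n R} (hA : A.IsHermitian) {G : Matrix n m R} {H : Matrix m m R}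
    (hP : (gramProjector G H).IsHermitian) :
    ∃ Ψ : Matrix m m R, Ψ.IsHermitian ∧
      gramProjector G H * A * gramProjector G H = G * Ψ * Gᴴ := by
  refine ⟨H * (Gᴴ * A * G) * Hᴴ,
    isHermitian_mul_mul_conjTranspose H (isHermitian_conjTranspose_mul_mul G hA), ?_⟩
  calc gramProjector G H * A * gramProjector G H
      = gramProjector G H * A * gramProjector G Hᴴ := by
        rw [← conjTranspose_gramProjector, hP.eq]
    _ = G * (H * (Gᴴ * A * G) * Hᴴ) * Gᴴ := by simp only [gramProjector, Matrix.mul_assoc]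

variable [Fintype n] [Ring R] [PartialOrder R] [StarRing R] [StarOrderedRing R] [NoZeroDivisors R]
  {G : Matrix n m R} {H : Matrix m m R}

lemma gramProjector_mul_self (hH : Gᴴ * G * H * (Gᴴ * G) = Gᴴ * G) :
    gramProjector G H * G = G := by
  classical
  have gram_mul_eq_zero : Gᴴ * G * (H * (Gᴴ * G) - 1) = 0 := by
    rw [Matrix.mul_sub, ← Matrix.mul_assoc, hH, Matrix.mul_one, sub_self]
  have mul_eq_zero : G * (H * (Gᴴ * G) - 1) = 0 :=
    (conjTranspose_mul_self_mul_eq_zero _ _).mp gram_mul_eq_zero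
  simpa only [gramProjector, Matrix.mul_sub, Matrix.mul_one, sub_eq_zero, Matrix.mul_assoc]
    using mul_eq_zero

lemma isStarProjection_gramProjector (hH : Gᴴ * G * H * (Gᴴ * G) = Gᴴ * G) :
    IsStarProjection (gramProjector G H) := by
  have mul_star : gramProjector G H * star (gramProjector G H) = star (gramProjector G H) := by
    rw [star_eq_conjTranspose, conjTranspose_gramProjector, gramProjector.eq_def G Hᴴ,
      ← Matrix.mul_assoc, ← Matrix.mul_assoc, gramProjector_mul_self hH]
  have selfAdjoint : IsSelfAdjoint (gramProjector G H) := by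
    rw [← IsSelfAdjoint.star_iff, ← mul_star]
    exact .mul_star_self _
  exact ⟨by rwa [selfAdjoint.star_eq] at mul_star, selfAdjoint⟩

lemma gramProjector_mul_mul_gramProjector (hH : Gᴴ * G * H * (Gᴴ * G) = Gᴴ * G)
    (Ψ : Matrix m m R) :
    gramProjector G H * (G * Ψ * Gᴴ) * gramProjector G H = G * Ψ * Gᴴ := by
  have conjTranspose_mul_gramProjector : Gᴴ * gramProjector G H = Gᴴ := by
    rw [← (isStarProjection_gramProjector hH).isSelfAdjoint.star_eq, star_eq_conjTranspose,
      ← conjTranspose_mul, gramProjector_mul_self hH]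
  calc gramProjector G H * (G * Ψ * Gᴴ) * gramProjector G H
      = gramProjector G H * G * Ψ * (Gᴴ * gramProjector G H) := by simp only [Matrix.mul_assoc]
    _ = G * Ψ * Gᴴ := by rw [gramProjector_mul_self hH, conjTranspose_mul_gramProjector]

end GramProjector

section Orthogonality

lemma mul_mul_mul_mul_of_isIdempotentElem {S : Type*} [Semigroup S] {p : S}
    (hp : IsIdempotentElem p) (a : S) : p * (p * a * p) * p = p * a * p := by
  calc p * (p * a * p) * p = p * p * a * (p * p) := by simp only [mul_assoc]
    _ = p * a * p := by rw [hp.eq]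

variable {m n R : Type*} [Fintype m] [Fintype n]

lemma trace_sub_mul_mul_mul_conjTranspose_eq_zero [NonUnitalCommRing R] [StarRing R]
    {P : Matrix n n R} (hP : IsStarProjection P) (A : Matrix n n R) {D : Matrix n n R}
    (hD : P * D * P = D) : trace ((A - P * A * P) * Dᴴ) = 0 := by
  have hP_star : Pᴴ = P := hP.isSelfAdjoint
  calc trace ((A - P * A * P) * Dᴴ)
      = trace ((A - P * A * P) * (P * Dᴴ) * P) := by
        conv_lhs => rw [← hD, conjTranspose_mul, conjTranspose_mul, hP_star]
        simp only [Matrix.mul_assoc]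
    _ = trace (P * (A - P * A * P) * P * Dᴴ) := by
        rw [trace_mul_comm]
        simp only [Matrix.mul_assoc]
    _ = 0 := by
        rw [mul_sub, sub_mul, mul_mul_mul_mul_of_isIdempotentElem hP.isIdempotentElem, sub_self,
          Matrix.zero_mul, trace_zero]

lemma trace_add_mul_conjTranspose_add_of_trace_eq_zero [NonUnitalNonAssocSemiring R]
    [StarRing R] {B C : Matrix m n R} (h : trace (B * Cᴴ) = 0) :
    trace ((B + C) * (B + C)ᴴ) = trace (B * Bᴴ) + trace (C * Cᴴ) := by
  have h_symm : trace (C * Bᴴ) = 0 := by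
    simpa only [conjTranspose_mul, conjTranspose_conjTranspose, star_zero, h]
      using trace_conjTranspose (B * Cᴴ)
  rw [conjTranspose_add, Matrix.add_mul, Matrix.mul_add, Matrix.mul_add, trace_add, trace_add,
    trace_add, h, h_symm, add_zero, zero_add]

end Orthogonality

section Frobenius

variable {n : Type*} [Fintype n]

lemma frobNorm_eq_sqrt_trace_mul_conjTranspose (A : Matrix n n ℝ) :
    frobNorm A = √(trace (A * Aᴴ)) := by
  rw [frobNorm, conjTranspose_eq_transpose_of_trivial]

lemma frobNorm_le_frobNorm_add_of_trace_eq_zero {B C : Matrix n n ℝ} (h : trace (B * Cᴴ) = 0) :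
    frobNorm B ≤ frobNorm (B + C) := by
  rw [frobNorm_eq_sqrt_trace_mul_conjTranspose, frobNorm_eq_sqrt_trace_mul_conjTranspose,
    trace_add_mul_conjTranspose_add_of_trace_eq_zero h]
  exact Real.sqrt_le_sqrt <| le_add_of_nonneg_right
    (posSemidef_self_mul_conjTranspose C).trace_nonneg

lemma frobNorm_sub_mul_mul_le {P : Matrix n n ℝ} (hP : IsStarProjection P) (A : Matrix n n ℝ)
    {B : Matrix n n ℝ} (hB : P * B * P = B) : frobNorm (A - P * A * P) ≤ frobNorm (A - B) := by
  have compress_sub : P * (P * A * P - B) * P = P * A * P - B := by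
    rw [mul_sub, sub_mul, mul_mul_mul_mul_of_isIdempotentElem hP.isIdempotentElem, hB]
  simpa only [sub_add_sub_cancel] using frobNorm_le_frobNorm_add_of_trace_eq_zero
    (trace_sub_mul_mul_mul_conjTranspose_eq_zero hP A compress_sub)

end Frobenius

theorem projection_of_symmetric_onto_SG_general {m n : Type*} [Fintype m] [Fintype n]
    (A : Matrix n n ℝ) (G : Matrix n m ℝ) (H : Matrix m m ℝ)
    (hH : (Gᵀ * G) * H * (Gᵀ * G) = Gᵀ * G) :
    (Aᵀ = A → ∃ Ψ : Matrix m m ℝ, Ψᵀ = Ψ ∧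
      (G * H * Gᵀ) * A * (G * H * Gᵀ) = G * Ψ * Gᵀ) ∧
    (∀ Ψ : Matrix m m ℝ,
      frobNorm (A - (G * H * Gᵀ) * A * (G * H * Gᵀ)) ≤ frobNorm (A - G * Ψ * Gᵀ)) := by
  simp only [← conjTranspose_eq_transpose_of_trivial] at hH ⊢
  have hP : IsStarProjection (gramProjector G H) := isStarProjection_gramProjector hH
  exact ⟨fun hA ↦ exists_isHermitian_gramProjector_mul_mul_eq hA hP.isSelfAdjoint,
    fun Ψ ↦ frobNorm_sub_mul_mul_le hP A (gramProjector_mul_mul_gramProjector hH Ψ)⟩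

/-- For symmetric `A`, with `H` a reflexive generalized inverse of `GᵀG` and
`Π = G H Gᵀ`, the matrix `Π A Π` is the projection of `A` on
`S(G) = {G Ψ Gᵀ : Ψ symmetric}`: it belongs to `S(G)` and minimizes the
Frobenius distance to `A` among elements of `S(G)`. -/
theorem projection_of_symmetric_onto_SG {p m : ℕ}
    (A : Matrix (Fin p) (Fin p) ℝ) (hA : Aᵀ = A)
    (G : Matrix (Fin p) (Fin m) ℝ) (H : Matrix (Fin m) (Fin m) ℝ)
    (hH₁ : (Gᵀ * G) * H * (Gᵀ * G) = Gᵀ * G)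
    (hH₂ : H * (Gᵀ * G) * H = H) :
    (∃ Ψ : Matrix (Fin m) (Fin m) ℝ, Ψᵀ = Ψ ∧
      (G * H * Gᵀ) * A * (G * H * Gᵀ) = G * Ψ * Gᵀ) ∧
    (∀ Ψ : Matrix (Fin m) (Fin m) ℝ, Ψᵀ = Ψ →
      frobNorm (A - (G * H * Gᵀ) * A * (G * H * Gᵀ)) ≤
        frobNorm (A - G * Ψ * Gᵀ)) := by
  obtain ⟨mem_SG, le_dist⟩ := projection_of_symmetric_onto_SG_general A G H hH₁
  exact ⟨mem_SG hA, fun Ψ _ ↦ le_dist Ψ⟩
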